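/- For an integral modular datum, the fusion symbol f: (Z/N)^× → Q_N^× defined by f(q) = σ_q(g)/g satisfies the 1-cocycle identity f(qq') = f(q)·σ_q(f(q')), and f is a Dirichlet character (i.e. multiplicative) if and only if g' = ±g; in that case f(q) ∈ {1,-1} for all q coprime to N. -/

import Mathlib

open Finset

/-- A modular datum over a field `K` of characteristic zero: a finite index set `I` with a
distinguished element `o`, an involution `star` fixing `o`, a symmetric Verlinde matrix `S`
with nonzero first column, a diagonal Dehn matrix with entries `T i` of finite order
satisfying `T (star i) = T i`, such that `S² = n·C` for a nonzero global dimension `n`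
(where `C = (δ_{i,j*})`), the matrices `T⁻¹ST⁻¹` and `STS` are proportional, and the
Verlinde numbers `N_{ij}^k` are nonnegative integers. -/
structure ModularDatum (K : Type*) [Field K] [CharZero K]
    (I : Type*) [Fintype I] [DecidableEq I] where
  o : I
  star : I → I
  S : Matrix I I K
  T : I → K
  n : K
  star_involutive : Function.Involutive star
  star_o : star o = o
  S_symm : ∀ i j, S i j = S j i
  S_io_ne : ∀ i, S i o ≠ 0
  T_star : ∀ i, T (star i) = T i
  T_order : ∃ N : ℕ, 0 < N ∧ ∀ i, T i ^ N = 1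
  n_ne : n ≠ 0
  S_sq : ∀ i k, (∑ j, S i j * S j k) = n * (if i = star k then 1 else 0)
  proportional : ∃ c : K, ∀ i j,
    (T i)⁻¹ * S i j * (T j)⁻¹ = c * ∑ k, S i k * T k * S k j
  verlinde : ∀ i j k, ∃ m : ℕ,
    (1 / n) * ∑ l, S i l * S j l * S (star k) l / S o l = (m : K)

namespace ModularDatum

variable {K : Type*} [Field K] [CharZero K] {I : Type*} [Fintype I] [DecidableEq I]
variable (d : ModularDatum K I)

/-- The `i`-th dimension `n_i = s_{io}`. -/
def ni (i : I) : K := d.S i d.o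

/-- The Gaussian sum `g = Σ_i n_i² t_i`. -/
def gauss : K := ∑ i, d.ni i ^ 2 * d.T i

/-- The reciprocal Gaussian sum `g' = Σ_i n_i² / t_i`. -/
def gauss' : K := ∑ i, d.ni i ^ 2 * (d.T i)⁻¹

/-- The Verlinde numbers `N_{ij}^k = (1/n) Σ_l s_{il} s_{jl} s_{k*l} / s_{ol}`. -/
def Nc (i j k : I) : K := (1 / d.n) * ∑ l, d.S i l * d.S j l * d.S (d.star k) l / d.S d.o l

end ModularDatum

namespace ModularDatum

variable {K : Type*} [Field K] [CharZero K] {I : Type*} [Fintype I] [DecidableEq I]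

/-- The Galois twist `σ_q(g) = Σ_i n_i² t_i^q` of the Gaussian sum. -/
def gaussTw (d : ModularDatum K I) (q : ℕ) : K := ∑ i, d.ni i ^ 2 * d.T i ^ q

/-- The fusion symbol `f(q) = σ_q(g)/g`. -/
def fsym (d : ModularDatum K I) (q : ℕ) : K := d.gaussTw q / d.gauss

end ModularDatum

namespace ModularDatum

open Polynomial in
theorem aux_root_iff {L : Type*} [Field L] [CharZero L] {N : ℕ} (hN : 0 < N) {z : L}
    (hz : IsPrimitiveRoot z N) {q : ℕ} (hq : Nat.Coprime q N) (Q : ℤ[X]) :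
    aeval z Q = 0 ↔ aeval (z ^ q) Q = 0 := by
  have h := hz.minpoly_eq_pow_coprime hq
  have h1 := minpoly.isIntegrallyClosed_dvd_iff (hz.isIntegral hN) Q
  have h2 := minpoly.isIntegrallyClosed_dvd_iff ((hz.isIntegral hN).pow q) Q
  rw [h1, h2, h]

variable {K : Type*} [Field K] [CharZero K] {I : Type*} [Fintype I] [DecidableEq I]

open Polynomial in
/-- A polynomial computing all twists at powers of a primitive root of unity. -/
theorem aux_poly {L : Type*} [Field L] [CharZero L] (φ : K →+* L) (d : ModularDatum K I)
    (hint : ∀ i, ∃ m : ℕ, 0 < m ∧ d.ni i = (m : K))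
    (N : ℕ) (hN : 0 < N) (hT : ∀ i, d.T i ^ N = 1) (z : L) (hz : IsPrimitiveRoot z N) :
    ∃ (P : ℤ[X]), ∀ q, aeval (z ^ q) P = φ (d.gaussTw q) := by
  have : NeZero N := ⟨hN.ne'⟩
  choose m hm0 hm using hint
  have hT' : ∀ i, ∃ a : ℕ, z ^ a = φ (d.T i) := by
    intro i
    obtain ⟨a, -, ha⟩ := hz.eq_pow_of_pow_eq_one
      (ξ := φ (d.T i)) (by rw [← map_pow, hT i, map_one])
    exact ⟨a, ha⟩
  choose a ha using hT'
  refine ⟨∑ i, (m i : ℤ[X]) ^ 2 * X ^ a i, fun q => ?_⟩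
  simp only [gaussTw, map_sum, map_mul, map_pow, map_natCast, aeval_X, hm]
  refine Finset.sum_congr rfl fun i _ => ?_
  rw [← pow_mul, mul_comm q, pow_mul, ha]

universe u in
theorem aux_ext (K : Type u) [Field K] [CharZero K] (N : ℕ) (hN : 0 < N) :
    ∃ (L : Type u) (_ : Field L) (_ : CharZero L) (_ : K →+* L) (z : L),
      IsPrimitiveRoot z N := by
  have : NeZero N := ⟨hN.ne'⟩
  have : CharZero (AlgebraicClosure K) :=
    charZero_of_injective_algebraMap (algebraMap K (AlgebraicClosure K)).injective
  have : NeZero (N : AlgebraicClosure K) := ⟨by exact_mod_cast hN.ne'⟩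
  obtain ⟨z, hz⟩ := HasEnoughRootsOfUnity.exists_primitiveRoot (AlgebraicClosure K) N
  exact ⟨AlgebraicClosure K, inferInstance, inferInstance, algebraMap K _, z, hz⟩

theorem gaussTw_one (d : ModularDatum K I) : d.gaussTw 1 = d.gauss := by
  simp [gaussTw, gauss]

theorem aux_T_ne (d : ModularDatum K I) (i : I) : d.T i ≠ 0 := by
  obtain ⟨M, hM, h⟩ := d.T_order
  intro h0
  have := h i
  rw [h0, zero_pow hM.ne'] at this
  exact zero_ne_one this

theorem gauss_mul (d : ModularDatum K I) :
    d.gauss * d.gauss' = d.n * d.ni d.o ^ 2 ∧ d.gauss ≠ 0 := by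
  obtain ⟨c, hc⟩ := d.proportional
  have ho := d.aux_T_ne d.o
  have h1 : (d.T d.o)⁻¹ * d.ni d.o * (d.T d.o)⁻¹ = c * d.gauss := by
    rw [ni, hc, gauss]
    congr 1
    refine Finset.sum_congr rfl fun k _ => ?_
    rw [ni, d.S_symm d.o k]; ring
  have h2 : d.gauss' = c * d.n * d.T d.o ^ 2 * d.ni d.o := by
    have e : ∀ j, d.ni j ^ 2 * (d.T j)⁻¹
        = ∑ k, c * d.T d.o * (d.S d.o k * d.T k) * (d.S k j * d.S j d.o) := by
      intro j
      have := hc d.o j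
      have h3 : d.S d.o j * (d.T j)⁻¹ = c * d.T d.o * ∑ k, d.S d.o k * d.T k * d.S k j := by
        rw [mul_assoc c, mul_left_comm, ← this]; field_simp
      calc d.ni j ^ 2 * (d.T j)⁻¹ = (d.S d.o j * (d.T j)⁻¹) * d.S j d.o := by
            rw [ni, d.S_symm d.o j]; ring
        _ = _ := by
            rw [h3, Finset.mul_sum, Finset.sum_mul]
            exact Finset.sum_congr rfl fun k _ => by ring
    rw [gauss', Finset.sum_congr rfl fun j _ => e j, Finset.sum_comm]
    simp_rw [← Finset.mul_sum, d.S_sq, d.star_o]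
    simp only [mul_ite, mul_one, mul_zero, Finset.sum_ite_eq', Finset.mem_univ, if_true, ni]
    ring
  constructor
  · have h3 : d.ni d.o = c * d.gauss * d.T d.o ^ 2 := by rw [← h1]; field_simp
    rw [h2]
    calc _ = d.n * (c * d.gauss * d.T d.o ^ 2) * d.ni d.o := by ring
      _ = _ := by rw [← h3]; ring
  · intro h0
    rw [h0, mul_zero] at h1
    have := d.S_io_ne d.o
    simp [ni, ho, this] at h1

theorem aux_n (d : ModularDatum K I) : d.n = ∑ i, d.ni i ^ 2 := by
  have := d.S_sq d.o d.o
  rw [d.star_o] at this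
  simp only [if_true, mul_one] at this
  rw [← this]
  exact Finset.sum_congr rfl fun k _ => by rw [ni, d.S_symm d.o k]; ring

end ModularDatum

/-- For an integral modular datum with exponent `N`, the fusion symbol satisfies the
1-cocycle identity `f(qq') = f(q)·σ_q(f(q'))` (where `σ_q(f(q')) = σ_{qq'}(g)/σ_q(g)`),
and `f` is a Dirichlet character (multiplicative) if and only if `g' = ±g`; in that case
`f(q) ∈ {1, -1}` for all `q` coprime to `N`. -/
theorem ModularDatum.fusion_symbol_character {K : Type*} [Field K] [CharZero K]
    {I : Type*} [Fintype I] [DecidableEq I] (d : ModularDatum K I)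
    (hint : ∀ i, ∃ m : ℕ, 0 < m ∧ d.ni i = (m : K))
    (N : ℕ) (hN : 0 < N) (hT : ∀ i, d.T i ^ N = 1) :
    (∀ q q' : ℕ, Nat.Coprime q N → Nat.Coprime q' N →
        d.fsym (q * q') = d.fsym q * (d.gaussTw (q * q') / d.gaussTw q)) ∧
    ((∀ q q' : ℕ, Nat.Coprime q N → Nat.Coprime q' N →
        d.fsym (q * q') = d.fsym q * d.fsym q') ↔
      (d.gauss' = d.gauss ∨ d.gauss' = -d.gauss)) ∧
    ((d.gauss' = d.gauss ∨ d.gauss' = -d.gauss) →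
      ∀ q : ℕ, Nat.Coprime q N → d.fsym q = 1 ∨ d.fsym q = -1) := by
  classical
  obtain ⟨hgg, hg⟩ := d.gauss_mul
  obtain ⟨L, _, _, φ, z, hz⟩ := ModularDatum.aux_ext K N hN
  obtain ⟨P, hP⟩ := d.aux_poly φ hint N hN hT z hz
  have hinj := φ.injective
  have hP1 : Polynomial.aeval z P = φ d.gauss := by
    rw [← d.gaussTw_one, ← hP 1, pow_one]
  have hne : ∀ q, Nat.Coprime q N → d.gaussTw q ≠ 0 := by
    intro q hq h0
    have h := (ModularDatum.aux_root_iff hN hz hq P).2 (by rw [hP, h0, map_zero])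
    rw [hP1, ← map_zero φ] at h
    exact hg (hinj h)
  have hint2 : ∃ R : ℤ, d.gauss * d.gauss' = (R : K) := by
    choose m hm0 hm using hint
    refine ⟨(∑ i, (m i : ℤ) ^ 2) * (m d.o : ℤ) ^ 2, ?_⟩
    rw [hgg, d.aux_n]
    simp [hm]
  have hpm : (d.gauss' = d.gauss ∨ d.gauss' = -d.gauss) →
      ∀ q : ℕ, Nat.Coprime q N → d.fsym q = 1 ∨ d.fsym q = -1 := by
    intro h q hq
    obtain ⟨R, hR⟩ := hint2
    have hsq : ∃ R : ℤ, d.gauss ^ 2 = (R : K) := by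
      rcases h with h | h
      · exact ⟨R, by rw [← hR, h]; ring⟩
      · exact ⟨-R, by push_cast; rw [← hR, h]; ring⟩
    obtain ⟨R', hR'⟩ := hsq
    have h1 := (ModularDatum.aux_root_iff hN hz hq (P ^ 2 - (R' : Polynomial ℤ))).1 (by
      rw [map_sub, map_pow, hP1, ← map_pow, hR']; simp)
    rw [map_sub, map_pow, hP, ← map_pow, map_intCast,
      ← map_intCast φ, sub_eq_zero] at h1
    have h2 := hinj h1
    rw [← hR'] at h2
    rcases sq_eq_sq_iff_eq_or_eq_neg.1 h2 with h3 | h3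
    · left; rw [ModularDatum.fsym, h3, div_self hg]
    · right; rw [ModularDatum.fsym, h3, neg_div, div_self hg]
  refine ⟨?_, ⟨?_, ?_⟩, hpm⟩
  · intro q q' hq hq'
    have := hne q hq
    rw [ModularDatum.fsym, ModularDatum.fsym]
    field_simp
  · intro h
    have hc : Nat.Coprime (N - 1) N := by
      obtain ⟨k, rfl⟩ : ∃ k, N = k + 1 := ⟨N - 1, by omega⟩
      simp
    have h1 : d.gaussTw (N - 1) = d.gauss' := by
      refine Finset.sum_congr rfl fun i _ => ?_
      congr 1
      apply eq_inv_of_mul_eq_one_left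
      rw [← pow_succ, Nat.sub_add_cancel hN, hT]
    have h2 : d.gaussTw ((N - 1) * (N - 1)) = d.gauss := by
      refine Finset.sum_congr rfl fun i _ => ?_
      congr 1
      have : d.T i ^ (N - 1) = (d.T i)⁻¹ := by
        apply eq_inv_of_mul_eq_one_left
        rw [← pow_succ, Nat.sub_add_cancel hN, hT]
      rw [pow_mul, this, inv_pow, this, inv_inv]
    have h3 := h _ _ hc hc
    rw [ModularDatum.fsym, ModularDatum.fsym, h1, h2, div_self hg] at h3
    field_simp at h3
    exact sq_eq_sq_iff_eq_or_eq_neg.1 h3.symm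
  · intro h q q' hq hq'
    have key : ∃ e : ℤ, d.gaussTw q' = e * d.gauss := by
      rcases hpm h q' hq' with h1 | h1 <;> rw [ModularDatum.fsym, div_eq_iff hg] at h1
      · exact ⟨1, by simpa using h1⟩
      · exact ⟨-1, by simpa using h1⟩
    obtain ⟨e, he⟩ := key
    have h1 := (ModularDatum.aux_root_iff hN hz hq
      (P.comp (Polynomial.X ^ q') - (e : Polynomial ℤ) * P)).1 (by
        rw [map_sub, Polynomial.aeval_comp, map_mul, hP1, map_pow, Polynomial.aeval_X, hP, he]
        simp)
    rw [map_sub, Polynomial.aeval_comp, map_mul, map_pow, Polynomial.aeval_X, ← pow_mul, hP, hP,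
      map_intCast, ← map_intCast φ, ← map_mul,
      sub_eq_zero] at h1
    have h2 := hinj h1
    rw [ModularDatum.fsym, ModularDatum.fsym, ModularDatum.fsym, h2, he]
    field_simp
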